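/- Let C be a group system, t ∈ ℤ, and k ≥ 1. Then the granule Γ^{[t,t+k]} = C^{[t,t+k]}/(C^{[t,t+k−1]}C^{[t+1,t+k]}) is isomorphic to Λ^{[t,t+k]} = π^{[t,t+k]}(D_k^t)/π^{[t,t+k]}(D_{k−1}^t), via the map sending the coset of a ∈ C^{[t,t+k]} to the coset of π^{[t,t+k]}(a). -/

import Mathlib

open scoped Pointwise

namespace GroupSystemPaper

variable {A : ℤ → Type*} [∀ t, Group (A t)]

/-- `C^{t+}` : codewords of the group system `C` that are the identity before time `t`. -/
def Cplus (C : Subgroup (∀ t, A t)) (t : ℤ) : Subgroup C where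
  carrier := {a | ∀ n < t, (a : ∀ s, A s) n = 1}
  one_mem' := by intro n hn; simp
  mul_mem' := by intro a b ha hb n hn; simp [ha n hn, hb n hn]
  inv_mem' := by intro a ha n hn; simp [ha n hn]

/-- `C^{t−}` : codewords of the group system `C` that are the identity from time `t` on. -/
def Cminus (C : Subgroup (∀ t, A t)) (t : ℤ) : Subgroup C where
  carrier := {a | ∀ n, t ≤ n → (a : ∀ s, A s) n = 1}
  one_mem' := by intro n hn; simp
  mul_mem' := by intro a b ha hb n hn; simp [ha n hn, hb n hn]
  inv_mem' := by intro a ha n hn; simp [ha n hn]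

/-- `C^{[t₁,t₂]}` : codewords supported on the interval `[t₁, t₂]`. -/
def Cint (C : Subgroup (∀ t, A t)) (t₁ t₂ : ℤ) : Subgroup C :=
  Cplus C t₁ ⊓ Cminus C (t₂ + 1)

instance Cplus_normal (C : Subgroup (∀ t, A t)) (t : ℤ) : (Cplus C t).Normal := by
  constructor
  intro x hx g n hn
  have h1 : (x : ∀ s, A s) n = 1 := hx n hn
  simp [h1]

instance Cminus_normal (C : Subgroup (∀ t, A t)) (t : ℤ) : (Cminus C t).Normal := by
  constructor
  intro x hx g n hn
  have h1 : (x : ∀ s, A s) n = 1 := hx n hn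
  simp [h1]

instance Cint_normal (C : Subgroup (∀ t, A t)) (t₁ t₂ : ℤ) : (Cint C t₁ t₂).Normal := by
  constructor
  intro x hx g
  rcases Subgroup.mem_inf.mp hx with ⟨h1, h2⟩
  exact Subgroup.mem_inf.mpr
    ⟨(Cplus_normal C t₁).conj_mem _ h1 g, (Cminus_normal C (t₂ + 1)).conj_mem _ h2 g⟩

/-- The normal subgroup `C^{t−}C^{t+}` of `C`. -/
def stateN (C : Subgroup (∀ t, A t)) (t : ℤ) : Subgroup C :=
  Cminus C t ⊔ Cplus C t

instance stateN_normal (C : Subgroup (∀ t, A t)) (t : ℤ) : (stateN C t).Normal :=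
  Subgroup.sup_normal _ _

/-- The canonical state space `Σ^t = C/(C^{t−}C^{t+})`. -/
abbrev State (C : Subgroup (∀ t, A t)) (t : ℤ) : Type _ :=
  ↥C ⧸ stateN C t

/-- The state projection `σ^t : C → Σ^t`. -/
def sigma (C : Subgroup (∀ t, A t)) (t : ℤ) : ↥C →* State C t :=
  QuotientGroup.mk' (stateN C t)

/-- The evaluation homomorphism `χ^t : C → A^t`. -/
def evalHom (C : Subgroup (∀ t, A t)) (t : ℤ) : ↥C →* A t :=
  (Pi.evalMonoidHom A t).comp C.subtype

/-- The branch homomorphism `β^t : C → Σ^t × A^t × Σ^{t+1}`. -/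
def beta (C : Subgroup (∀ t, A t)) (t : ℤ) :
    ↥C →* State C t × A t × State C (t + 1) :=
  (sigma C t).prod ((evalHom C t).prod (sigma C (t + 1)))

/-- The branch group `B^t = β^t(C)`. -/
def Branch (C : Subgroup (∀ t, A t)) (t : ℤ) :
    Subgroup (State C t × A t × State C (t + 1)) :=
  (beta C t).range

/-- `β^t` with codomain restricted to the branch group `B^t`. -/
def betaRes (C : Subgroup (∀ t, A t)) (t : ℤ) : ↥C →* ↥(Branch C t) :=
  (beta C t).rangeRestrict

/-- `X_j^t = β^t(C^{(t−j)+})` as a subgroup of the branch group `B^t`. -/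
def X (C : Subgroup (∀ t, A t)) (j t : ℤ) : Subgroup ↥(Branch C t) :=
  (Cplus C (t - j)).map (betaRes C t)

/-- `Y_i^t = β^t(C^{(t+i+1)−})` as a subgroup of the branch group `B^t`. -/
def Y (C : Subgroup (∀ t, A t)) (i t : ℤ) : Subgroup ↥(Branch C t) :=
  (Cminus C (t + i + 1)).map (betaRes C t)

instance X_normal (C : Subgroup (∀ t, A t)) (j t : ℤ) : (X C j t).Normal :=
  (Cplus_normal C (t - j)).map _ (MonoidHom.rangeRestrict_surjective _)

instance Y_normal (C : Subgroup (∀ t, A t)) (i t : ℤ) : (Y C i t).Normal :=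
  (Cminus_normal C (t + i + 1)).map _ (MonoidHom.rangeRestrict_surjective _)

/-- `Δ_k^t = X_0^t ∩ Y_k^t`. -/
def Del (C : Subgroup (∀ t, A t)) (k t : ℤ) : Subgroup ↥(Branch C t) :=
  X C 0 t ⊓ Y C k t

/-- `D_k^t = {a ∈ C : β^t(a) ∈ Δ_k^t}`. -/
def D (C : Subgroup (∀ t, A t)) (k t : ℤ) : Subgroup ↥C :=
  (Del C k t).comap (betaRes C t)

/-- Following-branch operator: for `S ⊆ B^{t₁}`,
`FSet C t₁ t₂ S = {β^{t₂}(a) : a ∈ C, β^{t₁}(a) ∈ S}`. -/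
def FSet (C : Subgroup (∀ t, A t)) (t₁ t₂ : ℤ) (S : Set ↥(Branch C t₁)) :
    Set ↥(Branch C t₂) :=
  {x | ∃ a : ↥C, betaRes C t₁ a ∈ S ∧ betaRes C t₂ a = x}

/-- `π^{[t,t+k]} : C → B^t × ⋯ × B^{t+k}`, `a ↦ (β^t(a), …, β^{t+k}(a))`. -/
def piSeg (C : Subgroup (∀ t, A t)) (t : ℤ) (k : ℕ) :
    ↥C →* ∀ j : Fin (k + 1), ↥(Branch C (t + ((j : ℕ) : ℤ))) where
  toFun a := fun j => betaRes C (t + ((j : ℕ) : ℤ)) a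
  map_one' := by funext j; simp
  map_mul' a b := by funext j; simp

/-- `π^{[t,t+k]}(D_m^t)`. -/
def Pseg (C : Subgroup (∀ t, A t)) (t : ℤ) (k : ℕ) (m : ℤ) :
    Subgroup (∀ j : Fin (k + 1), ↥(Branch C (t + ((j : ℕ) : ℤ)))) :=
  (D C m t).map (piSeg C t k)

/-- `β^{t+j}(D_m^t)` : the image of `D_m^t` in the branch group at time `t + j`. -/
def Qb (C : Subgroup (∀ t, A t)) (t m j : ℤ) : Subgroup ↥(Branch C (t + j)) :=
  (D C m t).map (betaRes C (t + j))

/-- The normal subgroup `C^{[t,t+k−1]}C^{[t+1,t+k]}` of `C` (denominator of the granule). -/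
def granN (C : Subgroup (∀ t, A t)) (t : ℤ) (k : ℕ) : Subgroup ↥C :=
  Cint C t (t + k - 1) ⊔ Cint C (t + 1) (t + k)

instance granN_normal (C : Subgroup (∀ t, A t)) (t : ℤ) (k : ℕ) : (granN C t k).Normal :=
  Subgroup.sup_normal _ _

lemma mem_D_of_mem_Cint (C : Subgroup (∀ t, A t)) (t : ℤ) (k : ℕ) {a : ↥C}
    (ha : a ∈ Cint C t (t + k)) : a ∈ D C (k : ℤ) t := by
  rcases Subgroup.mem_inf.mp ha with ⟨h1, h2⟩
  refine Subgroup.mem_comap.mpr (Subgroup.mem_inf.mpr ⟨?_, ?_⟩)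
  · exact Subgroup.mem_map.mpr ⟨a, by simpa using h1, rfl⟩
  · exact Subgroup.mem_map.mpr ⟨a, h2, rfl⟩

/-- `ℓ`-controllability of the group system `C`. -/
def Controllable (C : Subgroup (∀ t, A t)) (ℓ : ℕ) : Prop :=
  ∀ a b : ↥C, ∀ t : ℤ, ∃ c : ↥C,
    (∀ n < t, (c : ∀ s, A s) n = (a : ∀ s, A s) n) ∧
    (∀ n, t + (ℓ : ℤ) ≤ n → (c : ∀ s, A s) n = (b : ∀ s, A s) n)


/-!
For `m ≥ -1` one has `D_m^t = C^{[t,t+m]} · ker β^t`: if `β^t(p) = β^t(q)` with `p ∈ C^{t+}` and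
`q ∈ C^{(t+m+1)−}`, then `p⁻¹q` lies in `ker β^t ≤ C^{t−}C^{(t+1)+}`, and moving the `C^{(t+1)+}`
factor over to `p` leaves a codeword supported on `[t,t+m]` with the same branch at time `t`.
Since `C^{t+} ∩ ker β^t = C^{(t+1)+}`, the modular law then gives

* `C^{[t,t+k]} · D_{k−1}^t = D_k^t`,
* `C^{[t,t+k]} ∩ D_{k−1}^t = C^{[t,t+k−1]}C^{[t+1,t+k]}`,

so by the second isomorphism theorem the granule is `D_k^t / D_{k−1}^t`. The kernel of
`π^{[t,t+k]}` is contained in `ker β^t ≤ D_{k−1}^t`, so applying `π^{[t,t+k]}` to both groups does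
not change the quotient.
-/

section GroupTheory

variable {G G' : Type*} [Group G] [Group G']

lemma sup_inf_assoc_of_le_of_normal {H K : Subgroup G} (N : Subgroup G) [N.Normal] (hHK : H ≤ K) :
    (H ⊔ N) ⊓ K = H ⊔ N ⊓ K := by
  refine le_antisymm ?_ (sup_le (le_inf le_sup_left hHK) (inf_le_inf_right K le_sup_right))
  rintro _ ⟨hx, hxK⟩
  obtain ⟨h, hh, n, hn, rfl⟩ := Subgroup.mem_sup_of_normal_right.mp hx
  exact Subgroup.mul_mem_sup hh ⟨hn, (K.mul_mem_cancel_left (hHK hh)).mp hxK⟩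

lemma normal_map_subgroupOf_map (φ : G →* G') (N D : Subgroup G) [N.Normal] :
    ((N.map φ).subgroupOf (D.map φ)).Normal := by
  refine Subgroup.normal_subgroupOf_of_le_normalizer ?_
  calc D.map φ ≤ (Subgroup.normalizer (N : Set G)).map φ :=
        Subgroup.map_mono (Subgroup.normalizer_eq_top (H := N) ▸ le_top)
    _ ≤ Subgroup.normalizer (N.map φ : Set G') := Subgroup.le_normalizer_map φ

/-- The homomorphism `H → φ(D)/φ(N)`, `a ↦ φ(a)φ(N)`, for subgroups `H ≤ D` and `N` of the domain
of `φ`. -/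
def toMapQuotient (φ : G →* G') {H D : Subgroup G} (N : Subgroup G) (hHD : H ≤ D)
    [((N.map φ).subgroupOf (D.map φ)).Normal] :
    H →* D.map φ ⧸ (N.map φ).subgroupOf (D.map φ) :=
  (QuotientGroup.mk' _).comp ((φ.subgroupMap D).comp (Subgroup.inclusion hHD))

lemma ker_toMapQuotient {φ : G →* G'} {H N D : Subgroup G} (hφ : φ.ker ≤ N) (hHD : H ≤ D)
    [((N.map φ).subgroupOf (D.map φ)).Normal] :
    (toMapQuotient φ N hHD).ker = N.subgroupOf H := by
  ext a
  have hcoset : a ∈ (toMapQuotient φ N hHD).ker ↔ (a : G) ∈ (N.map φ).comap φ :=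
    QuotientGroup.eq_one_iff _
  rw [hcoset, Subgroup.comap_map_eq_self hφ, Subgroup.mem_subgroupOf]

lemma toMapQuotient_surjective (φ : G →* G') {H N D : Subgroup G} [N.Normal] (hHD : H ≤ D)
    (hD : D ≤ H ⊔ N) [((N.map φ).subgroupOf (D.map φ)).Normal] :
    Function.Surjective (toMapQuotient φ N hHD) := by
  intro q
  obtain ⟨⟨_, d, hd, rfl⟩, rfl⟩ := QuotientGroup.mk_surjective q
  obtain ⟨h, hh, n, hn, rfl⟩ := Subgroup.mem_sup_of_normal_right.mp (hD hd)
  have hcoset : (φ h)⁻¹ * φ (h * n) ∈ N.map φ := by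
    simpa only [map_mul, inv_mul_cancel_left] using Subgroup.mem_map_of_mem φ hn
  exact ⟨⟨h, hh⟩, QuotientGroup.eq.mpr hcoset⟩

/-- The second isomorphism theorem seen through a homomorphism `φ` with `ker φ ≤ N`:
`H/(H ∩ N) ≅ φ(D)/φ(N)` where `D = HN`, sending the coset of `a` to the coset of `φ(a)`. -/
noncomputable def quotientSubgroupOfEquivMap (φ : G →* G') {H N D : Subgroup G} [N.Normal]
    (hφ : φ.ker ≤ N) (hD : H ⊔ N = D) [((N.map φ).subgroupOf (D.map φ)).Normal] :
    H ⧸ N.subgroupOf H ≃* D.map φ ⧸ (N.map φ).subgroupOf (D.map φ) :=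
  (QuotientGroup.quotientMulEquivOfEq (ker_toMapQuotient hφ (le_sup_left.trans hD.le)).symm).trans
    (QuotientGroup.quotientKerEquivOfSurjective _ (toMapQuotient_surjective φ _ hD.ge))

end GroupTheory

section Codewords

variable (C : Subgroup (∀ t, A t))

lemma Cplus_antitone : Antitone (Cplus C) :=
  fun _ _ hst _ ha n hn => ha n (hn.trans_le hst)

lemma Cminus_monotone : Monotone (Cminus C) :=
  fun _ _ hst _ ha n hn => ha n (hst.trans hn)

lemma Cint_le_Cint {s₁ t₁ s₂ t₂ : ℤ} (hs : s₂ ≤ s₁) (ht : t₁ ≤ t₂) :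
    Cint C s₁ t₁ ≤ Cint C s₂ t₂ :=
  inf_le_inf (Cplus_antitone C hs) (Cminus_monotone C (by lia))

lemma Cminus_le_ker_evalHom (t : ℤ) : Cminus C t ≤ (evalHom C t).ker :=
  fun _ ha => ha t le_rfl

lemma Cplus_inf_ker_evalHom (t : ℤ) : Cplus C t ⊓ (evalHom C t).ker = Cplus C (t + 1) := by
  refine le_antisymm ?_ fun a ha => ⟨Cplus_antitone C (by lia) ha, ha t (by lia)⟩
  rintro a ⟨hplus, heval⟩ n hn
  obtain hlt | rfl := (Int.lt_add_one_iff.mp hn).lt_or_eq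
  · exact hplus n hlt
  · exact heval

end Codewords

section Branches

variable (C : Subgroup (∀ t, A t))

lemma ker_betaRes (t : ℤ) :
    (betaRes C t).ker = stateN C t ⊓ ((evalHom C t).ker ⊓ stateN C (t + 1)) := by
  refine (MonoidHom.ker_rangeRestrict (beta C t)).trans ?_
  simp only [beta, sigma, MonoidHom.ker_prod, QuotientGroup.ker_mk']

lemma Cplus_inf_ker_betaRes (t : ℤ) : Cplus C t ⊓ (betaRes C t).ker = Cplus C (t + 1) := by
  have hplus : Cplus C t ≤ stateN C t := le_sup_right
  have hplus_succ : Cplus C (t + 1) ≤ stateN C (t + 1) := le_sup_right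
  rw [ker_betaRes, ← inf_assoc, inf_eq_left.mpr hplus, ← inf_assoc, Cplus_inf_ker_evalHom,
    inf_eq_left.mpr hplus_succ]

lemma Cplus_succ_le_ker_betaRes (t : ℤ) : Cplus C (t + 1) ≤ (betaRes C t).ker :=
  (Cplus_inf_ker_betaRes C t).ge.trans inf_le_right

lemma ker_betaRes_le (t : ℤ) : (betaRes C t).ker ≤ Cminus C t ⊔ Cplus C (t + 1) :=
  calc (betaRes C t).ker ≤ (Cminus C t ⊔ Cplus C t) ⊓ (evalHom C t).ker := by
        rw [ker_betaRes, ← inf_assoc]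
        exact inf_le_left
    _ = Cminus C t ⊔ Cplus C (t + 1) := by
        rw [sup_inf_assoc_of_le_of_normal _ (Cminus_le_ker_evalHom C t), Cplus_inf_ker_evalHom]

lemma Cplus_inf_Cminus_sup_ker_betaRes_le {t u : ℤ} (htu : t ≤ u) :
    Cplus C t ⊓ (Cminus C u ⊔ (betaRes C t).ker) ≤ Cplus C t ⊓ Cminus C u ⊔ (betaRes C t).ker := by
  have hsup : Cminus C u ⊔ (betaRes C t).ker ≤ Cplus C (t + 1) ⊔ Cminus C u :=
    sup_le le_sup_right <| (ker_betaRes_le C t).trans <|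
      sup_le ((Cminus_monotone C htu).trans le_sup_right) le_sup_left
  calc Cplus C t ⊓ (Cminus C u ⊔ (betaRes C t).ker)
      ≤ (Cplus C (t + 1) ⊔ Cminus C u) ⊓ Cplus C t := by
        rw [inf_comm]
        exact inf_le_inf_right _ hsup
    _ = Cplus C (t + 1) ⊔ Cminus C u ⊓ Cplus C t :=
        sup_inf_assoc_of_le_of_normal _ (Cplus_antitone C (by lia))
    _ ≤ Cplus C t ⊓ Cminus C u ⊔ (betaRes C t).ker := by
        rw [sup_comm, inf_comm]
        exact sup_le_sup_left (Cplus_succ_le_ker_betaRes C t) _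

instance D_normal (m t : ℤ) : (D C m t).Normal := by
  unfold D Del
  infer_instance

lemma D_eq_inf (m t : ℤ) :
    D C m t = (Cplus C t ⊔ (betaRes C t).ker) ⊓ (Cminus C (t + m + 1) ⊔ (betaRes C t).ker) := by
  rw [D, Del, X, Y, Subgroup.comap_inf, Subgroup.comap_map_eq, Subgroup.comap_map_eq, sub_zero]

lemma ker_betaRes_le_D (m t : ℤ) : (betaRes C t).ker ≤ D C m t :=
  MonoidHom.ker_le_comap _ _

lemma D_eq_Cint_sup_ker_betaRes {m : ℤ} (hm : -1 ≤ m) (t : ℤ) :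
    D C m t = Cint C t (t + m) ⊔ (betaRes C t).ker := by
  rw [D_eq_inf]
  refine le_antisymm ?_ <|
    sup_le (inf_le_inf le_sup_left le_sup_left) (le_inf le_sup_right le_sup_right)
  rw [sup_comm (Cplus C t), sup_inf_assoc_of_le_of_normal _ le_sup_right]
  exact sup_le le_sup_right (Cplus_inf_Cminus_sup_ker_betaRes_le C (by lia))

lemma Cint_sup_D_pred {m : ℤ} (hm : 0 ≤ m) (t : ℤ) :
    Cint C t (t + m) ⊔ D C (m - 1) t = D C m t := by
  have hle : Cint C t (t + (m - 1)) ≤ Cint C t (t + m) := Cint_le_Cint C le_rfl (by lia)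
  rw [D_eq_Cint_sup_ker_betaRes C (by lia), D_eq_Cint_sup_ker_betaRes C (by lia), ← sup_assoc,
    sup_eq_left.mpr hle]

lemma D_pred_inf_Cint (t : ℤ) (k : ℕ) :
    D C ((k : ℤ) - 1) t ⊓ Cint C t (t + k) = granN C t k := by
  have hle : Cint C t (t + k - 1) ≤ Cint C t (t + k) := Cint_le_Cint C le_rfl (by lia)
  have hker : (betaRes C t).ker ⊓ Cint C t (t + k) = Cint C (t + 1) (t + k) := by
    rw [Cint, ← inf_assoc, inf_comm (betaRes C t).ker, Cplus_inf_ker_betaRes, Cint]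
  rw [D_eq_Cint_sup_ker_betaRes C (by lia), ← add_sub_assoc, sup_inf_assoc_of_le_of_normal _ hle,
    hker, granN]

lemma granN_subgroupOf_Cint (t : ℤ) (k : ℕ) :
    (granN C t k).subgroupOf (Cint C t (t + k)) =
      (D C ((k : ℤ) - 1) t).subgroupOf (Cint C t (t + k)) := by
  rw [← D_pred_inf_Cint, Subgroup.inf_subgroupOf_right]

lemma ker_piSeg_le_ker_betaRes (t : ℤ) (k : ℕ) : (piSeg C t k).ker ≤ (betaRes C t).ker := by
  intro a ha
  have hzero : a ∈ (betaRes C (t + ((0 : ℕ) : ℤ))).ker := congrFun ha 0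
  rwa [Nat.cast_zero, add_zero] at hzero

end Branches

/-- The granule `Γ^{[t,t+k]} = C^{[t,t+k]}/(C^{[t,t+k−1]}C^{[t+1,t+k]})`
is isomorphic to `Λ^{[t,t+k]} = π^{[t,t+k]}(D_k^t)/π^{[t,t+k]}(D_{k−1}^t)` via the map
sending the coset of `a ∈ C^{[t,t+k]}` to the coset of `π^{[t,t+k]}(a)`. -/
theorem statement14 (C : Subgroup (∀ t, A t)) (t : ℤ) (k : ℕ) (hk : 1 ≤ k) :
    ((Pseg C t k ((k : ℤ) - 1)).subgroupOf (Pseg C t k (k : ℤ))).Normal ∧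
    ∀ (hP : ((Pseg C t k ((k : ℤ) - 1)).subgroupOf (Pseg C t k (k : ℤ))).Normal),
      haveI := hP
      ∃ e : (↥(Cint C t (t + (k : ℤ))) ⧸
               (granN C t k).subgroupOf (Cint C t (t + (k : ℤ)))) ≃*
            (↥(Pseg C t k (k : ℤ)) ⧸
               (Pseg C t k ((k : ℤ) - 1)).subgroupOf (Pseg C t k (k : ℤ))),
        ∀ (a : ↥C) (ha : a ∈ Cint C t (t + (k : ℤ))),
          e (QuotientGroup.mk ⟨a, ha⟩) =
            QuotientGroup.mk
              ⟨piSeg C t k a, Subgroup.mem_map_of_mem _ (mem_D_of_mem_Cint C t k ha)⟩ := by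
  refine ⟨normal_map_subgroupOf_map (piSeg C t k) _ _, fun hP => ?_⟩
  have hker : (piSeg C t k).ker ≤ D C ((k : ℤ) - 1) t :=
    (ker_piSeg_le_ker_betaRes C t k).trans (ker_betaRes_le_D C _ t)
  have hsup : Cint C t (t + k) ⊔ D C ((k : ℤ) - 1) t = D C k t := Cint_sup_D_pred C (by lia) t
  have : (((D C ((k : ℤ) - 1) t).map (piSeg C t k)).subgroupOf
      ((D C k t).map (piSeg C t k))).Normal := hP
  exact ⟨(QuotientGroup.quotientMulEquivOfEq (granN_subgroupOf_Cint C t k)).trans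
    (quotientSubgroupOfEquivMap (piSeg C t k) hker hsup), fun _ _ => rfl⟩

end GroupSystemPaper
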